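/- arXiv:2109.02756 — 5 statements merged into one kernel-verified Lean document; each statement's English description precedes it below -/
import Mathlib

section
/- Let P ∈ ℝ^{n×n} be symmetric positive semidefinite, q ∈ ℝⁿ, H ∈ ℝ^{m×n}, g ∈ ℝᵐ, D ⊆ ℝⁿ nonempty closed convex, K ⊆ ℝᵐ a nonempty closed convex cone with polar cone K°. Suppose the step size α satisfies 0 < α ≤ (8 − 4/γ)/(√(λ² + 16ν²) + λ) for some γ ∈ (1/2, 1), λ ≥ ‖P‖, ν ≥ ‖H‖. For j = 1, 2, let z_j ∈ D, v_j ∈ ℝᵐ, and define w_j⁺ = π_{K°}[v_j + α(H z_j − g)], z_j⁺ = π_D[z_j − α(P z_j + q + Hᵀ w_j⁺)], v_j⁺ = w_j⁺ + α H (z_j⁺ − z_j). Then ‖z₂⁺ − z₁⁺‖² + ((1−γ)/γ)‖z₁ − z₁⁺ − z₂ + z₂⁺‖² + ‖v₂⁺ − v₁⁺‖² + ((1−γ)/γ)‖v₁ − v₁⁺ − v₂ + v₂⁺‖² ≤ ‖z₂ − z₁‖² + ‖v₂ − v₁‖². In other words, the PIPG update map (z,v) ↦ (z⁺, v⁺)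 is a γ-averaged operator on ℝⁿ × ℝᵐ. -/
open scoped RealInnerProductSpace
open Filter Topology Metric ContinuousLinearMap

/-- Projection onto a set: the unique nearest point, when it exists
(it exists and is unique for nonempty closed convex sets in Euclidean space). -/
noncomputable def proj {E : Type*} [NormedAddCommGroup E] [InnerProductSpace ℝ E]
    (S : Set E) (x : E) : E :=
  open Classical in
  if h : ∃ y, y ∈ S ∧ ∀ z ∈ S, ‖x - y‖ ≤ ‖x - z‖ then h.choose else 0

/-- The polar cone `K° = {w | ⟪w, y⟫ ≤ 0 for all y ∈ K}`. -/
def polarCone {E : Type*} [NormedAddCommGroup E] [InnerProductSpace ℝ E]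
    (K : Set E) : Set E := {w | ∀ y ∈ K, ⟪w, y⟫ ≤ 0}

/-- The recession cone `rec D = {y | y + z ∈ D for all z ∈ D}`. -/
def recCone {E : Type*} [NormedAddCommGroup E] (D : Set E) : Set E :=
  {y | ∀ z ∈ D, y + z ∈ D}

/-- The normal cone of `D` at `z`: `N_D(z) = {y | ⟪y, z' - z⟫ ≤ 0 for all z' ∈ D}`. -/
def normalCone {E : Type*} [NormedAddCommGroup E] [InnerProductSpace ℝ E]
    (D : Set E) (z : E) : Set E := {y | ∀ z' ∈ D, ⟪y, z' - z⟫ ≤ 0}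

theorem proj_spec {E : Type*} [NormedAddCommGroup E] [InnerProductSpace ℝ E] [CompleteSpace E]
    {S : Set E} (hne : S.Nonempty) (hcl : IsClosed S) (hconv : Convex ℝ S) (x : E) :
    proj S x ∈ S ∧ ∀ z ∈ S, ⟪x - proj S x, z - proj S x⟫ ≤ 0 := by
  obtain ⟨y, hy, hyi⟩ := exists_norm_eq_iInf_of_complete_convex hne hcl.isComplete hconv x
  have hbdd : BddBelow (Set.range fun w : S => ‖x - w‖) :=
    ⟨0, by rintro _ ⟨w, rfl⟩; exact norm_nonneg _⟩
  have h : ∃ y, y ∈ S ∧ ∀ z ∈ S, ‖x - y‖ ≤ ‖x - z‖ := by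
    refine ⟨y, hy, fun z hz => ?_⟩
    rw [hyi]
    exact ciInf_le hbdd (⟨z, hz⟩ : S)
  have hp : proj S x = h.choose := by
    unfold _root_.proj
    rw [dif_pos h]
  obtain ⟨h1, h2⟩ := h.choose_spec
  rw [← hp] at h1 h2
  refine ⟨h1, ?_⟩
  refine (norm_eq_iInf_iff_real_inner_le_zero hconv h1).1 ?_
  have : Nonempty S := hne.to_subtype
  exact le_antisymm (le_ciInf fun w => h2 w w.2) (ciInf_le hbdd (⟨_, h1⟩ : S))

theorem proj_mono {E : Type*} [NormedAddCommGroup E] [InnerProductSpace ℝ E] [CompleteSpace E]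
    {S : Set E} (hne : S.Nonempty) (hcl : IsClosed S) (hconv : Convex ℝ S) (x1 x2 y1 y2 : E)
    (h1 : y1 = proj S x1) (h2 : y2 = proj S x2) :
    0 ≤ ⟪(x2 - x1) - (y2 - y1), y2 - y1⟫ := by
  obtain ⟨a1, b1⟩ := proj_spec hne hcl hconv x1
  obtain ⟨a2, b2⟩ := proj_spec hne hcl hconv x2
  rw [← h1] at a1 b1
  rw [← h2] at a2 b2
  have c1 := b1 y2 a2
  have c2 := b2 y1 a1
  simp only [inner_sub_left, inner_sub_right] at *
  linarith

theorem polarCone_facts {E : Type*} [NormedAddCommGroup E] [InnerProductSpace ℝ E] (K : Set E) :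
    (polarCone K).Nonempty ∧ IsClosed (polarCone K) ∧ Convex ℝ (polarCone K) := by
  refine ⟨⟨0, fun y _ => by simp⟩, ?_, ?_⟩
  · have : polarCone K = ⋂ y ∈ K, {w : E | ⟪w, y⟫ ≤ 0} := by
      ext w; simp [polarCone]
    rw [this]
    refine isClosed_biInter fun y _ => isClosed_le (by fun_prop) continuous_const
  · intro a ha b hb s t hs ht _ y hy
    rw [inner_add_left, real_inner_smul_left, real_inner_smul_left]
    nlinarith [ha y hy, hb y hy, mul_nonneg hs (neg_nonneg.2 (ha y hy)),
      mul_nonneg ht (neg_nonneg.2 (hb y hy))]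

theorem scalar_ineq (γ lam ν α a b : ℝ) (hγ : 1/2 < γ) (hl : 0 ≤ lam)
    (hα0 : 0 < α)
    (hα : α ≤ (8 - 4/γ) / (Real.sqrt (lam^2 + 16*ν^2) + lam)) :
    α * lam / 2 * a^2 + 2 * α * ν * (a * b) ≤ (1 - (1-γ)/γ) * (a^2 + b^2) := by
  have hγ0 : 0 < γ := by linarith
  set s := 2 - 1/γ with hs
  have e1 : 1 - (1-γ)/γ = s := by rw [hs]; field_simp; ring
  have e2 : 8 - 4/γ = 4 * s := by rw [hs]; field_simp; ring
  have hs0 : 0 < s := by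
    have : s = (2*γ - 1)/γ := by rw [hs]; field_simp
    rw [this]; apply div_pos <;> linarith
  rw [e1]; rw [e2] at hα
  set r := Real.sqrt (lam^2 + 16*ν^2) with hr
  have hr0 : 0 ≤ r := Real.sqrt_nonneg _
  have hr2 : r^2 = lam^2 + 16*ν^2 := Real.sq_sqrt (by positivity)
  have hd : 0 < r + lam := by
    rcases (add_nonneg hr0 hl).lt_or_eq with h | h
    · exact h
    · rw [← h, div_zero] at hα; linarith
  rw [le_div_iff₀ hd] at hα
  have h1 : α * r ≤ 4 * s - α * lam := by linarith
  have h2 : (α * r)^2 ≤ (4 * s - α * lam)^2 := pow_le_pow_left₀ (by positivity) h1 2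
  rw [mul_pow, hr2] at h2
  have h3 : 0 ≤ s^2 - s * α * lam / 2 - α^2 * ν^2 := by nlinarith
  have h4 : 0 ≤ s * (s * (a^2 + b^2) - (α * lam / 2 * a^2 + 2 * α * ν * (a * b))) := by
    nlinarith [sq_nonneg (s * b - α * ν * a), mul_nonneg h3 (sq_nonneg a)]
  have := nonneg_of_mul_nonneg_right h4 hs0
  linarith

/-- one step of PIPG is a `γ`-averaged operator. -/
theorem stmt0 {n m : ℕ}
    (P : EuclideanSpace ℝ (Fin n) →L[ℝ] EuclideanSpace ℝ (Fin n))
    (hPsa : IsSelfAdjoint P) (hPpsd : ∀ x, 0 ≤ ⟪P x, x⟫)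
    (q : EuclideanSpace ℝ (Fin n))
    (H : EuclideanSpace ℝ (Fin n) →L[ℝ] EuclideanSpace ℝ (Fin m))
    (g : EuclideanSpace ℝ (Fin m))
    (D : Set (EuclideanSpace ℝ (Fin n)))
    (hDne : D.Nonempty) (hDcl : IsClosed D) (hDconv : Convex ℝ D)
    (K : Set (EuclideanSpace ℝ (Fin m)))
    (hKne : K.Nonempty) (hKcl : IsClosed K) (hKconv : Convex ℝ K)
    (hKcone : ∀ w ∈ K, ∀ a : ℝ, 0 ≤ a → a • w ∈ K)
    (γ lam ν α : ℝ) (hγ : 1/2 < γ) (hγ1 : γ < 1)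
    (hlam : ‖P‖ ≤ lam) (hν : ‖H‖ ≤ ν) (hα0 : 0 < α)
    (hα : α ≤ (8 - 4/γ) / (Real.sqrt (lam^2 + 16*ν^2) + lam))
    (z1 z2 : EuclideanSpace ℝ (Fin n)) (hz1 : z1 ∈ D) (hz2 : z2 ∈ D)
    (v1 v2 : EuclideanSpace ℝ (Fin m))
    (w1p w2p : EuclideanSpace ℝ (Fin m))
    (z1p z2p : EuclideanSpace ℝ (Fin n))
    (v1p v2p : EuclideanSpace ℝ (Fin m))
    (hw1 : w1p = proj (polarCone K) (v1 + α • (H z1 - g)))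
    (hw2 : w2p = proj (polarCone K) (v2 + α • (H z2 - g)))
    (hz1p : z1p = proj D (z1 - α • (P z1 + q + (ContinuousLinearMap.adjoint H) w1p)))
    (hz2p : z2p = proj D (z2 - α • (P z2 + q + (ContinuousLinearMap.adjoint H) w2p)))
    (hv1p : v1p = w1p + α • H (z1p - z1))
    (hv2p : v2p = w2p + α • H (z2p - z2)) :
    ‖z2p - z1p‖^2 + ((1 - γ)/γ) * ‖z1 - z1p - z2 + z2p‖^2
      + ‖v2p - v1p‖^2 + ((1 - γ)/γ) * ‖v1 - v1p - v2 + v2p‖^2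
      ≤ ‖z2 - z1‖^2 + ‖v2 - v1‖^2 := by
  obtain ⟨kn, kc, kv⟩ := polarCone_facts K
  have m1 := proj_mono kn kc kv _ _ _ _ hw1 hw2
  have m2 := proj_mono hDne hDcl hDconv _ _ _ _ hz1p hz2p
  obtain ⟨z, hz⟩ : ∃ z, z = z2 - z1 := ⟨_, rfl⟩
  obtain ⟨d, hd⟩ : ∃ d, d = (z2p - z1p) - (z2 - z1) := ⟨_, rfl⟩
  obtain ⟨e, he⟩ : ∃ e, e = (v2p - v1p) - (v2 - v1) := ⟨_, rfl⟩
  obtain ⟨w, hw⟩ : ∃ w, w = w2p - w1p := ⟨_, rfl⟩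
  have q1 : (v2 + α • (H z2 - g)) - (v1 + α • (H z1 - g)) - (w2p - w1p)
      = α • H (z + d) - e := by
    rw [he, hv1p, hv2p, hz, hd]
    simp only [map_sub, map_add, smul_sub, smul_add]
    abel
  have q2 : (z2 - α • (P z2 + q + (ContinuousLinearMap.adjoint H) w2p))
      - (z1 - α • (P z1 + q + (ContinuousLinearMap.adjoint H) w1p)) - (z2p - z1p)
      = -d - α • (P z + (ContinuousLinearMap.adjoint H) w) := by
    rw [hd, hz, hw]
    simp only [map_sub, smul_sub, smul_add]
    abel
  have q3 : z2p - z1p = z + d := by rw [hz, hd]; abel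
  have q4 : v2p - v1p = w + α • H d := by
    rw [hv1p, hv2p, hw, hd]
    simp only [map_sub, smul_sub]
    abel
  have q5 : v2 - v1 = (w + α • H d) - e := by rw [← q4, he]; abel
  have q6 : z1 - z1p - z2 + z2p = d := by rw [hd]; abel
  have q7 : v1 - v1p - v2 + v2p = e := by rw [he]; abel
  rw [q1, ← hw] at m1
  rw [q2, q3] at m2
  rw [q3, q4, q5, q6, q7, ← hz]
  have hl0 : 0 ≤ lam := (norm_nonneg P).trans hlam
  have sc := scalar_ineq γ lam ν α ‖d‖ ‖e‖ hγ hl0 hα0 hα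
  have cs : ⟪H d, e⟫ ≤ ν * (‖d‖ * ‖e‖) := by
    calc ⟪H d, e⟫ ≤ ‖H d‖ * ‖e‖ := real_inner_le_norm _ _
      _ ≤ (ν * ‖d‖) * ‖e‖ := by gcongr; exact H.le_of_opNorm_le hν d
      _ = _ := by ring
  have cp : ⟪P d, d⟫ ≤ lam * ‖d‖^2 := by
    calc ⟪P d, d⟫ ≤ ‖P d‖ * ‖d‖ := real_inner_le_norm _ _
      _ ≤ (lam * ‖d‖) * ‖d‖ := by gcongr; exact P.le_of_opNorm_le hlam d
      _ = _ := by ring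
  have sym : ⟪P d, z⟫ = ⟪P z, d⟫ := by
    have h0 := ContinuousLinearMap.adjoint_inner_left P z d
    rw [hPsa.adjoint_eq] at h0
    rw [h0, real_inner_comm]
  have ps := hPpsd ((2:ℝ) • z + d)
  simp only [map_add, map_smul, inner_add_left, inner_add_right, real_inner_smul_left,
    real_inner_smul_right, sym] at ps
  simp only [map_add, inner_sub_left, inner_add_left, inner_add_right, inner_neg_left,
    real_inner_smul_left, ContinuousLinearMap.adjoint_inner_left] at m1 m2
  rw [norm_sub_sq_real (w + α • H d) e, norm_add_sq_real z d, inner_add_left w (α • H d) e,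
    real_inner_smul_left]
  have cs' := mul_le_mul_of_nonneg_left cs hα0.le
  have cp' := mul_le_mul_of_nonneg_left cp hα0.le
  have ps' := mul_nonneg hα0.le ps
  have k1 := real_inner_comm d z
  have k2 := real_inner_comm w (H z)
  have k3 := real_inner_comm w (H d)
  have k4 := real_inner_self_eq_norm_sq d
  have k5 := real_inner_comm e w
  rw [k2, k3, ← k5] at m1
  rw [← k1, k4] at m2
  linarith
end

section
/- Let T : ℝᵖ → ℝᵖ be a γ-averaged operator for some γ ∈ (0, 1). Let ξ¹ ∈ ℝᵖ and define ξ^{j+1} = T(ξ^j) for all j ∈ ℕ. Then there exists a vector ξ̄ ∈ ℝᵖ (the minimal-displacement vector of T) such that lim_{j→∞} ξ^j / j = ξ̄ and lim_{j→∞} (ξ^{j+1} − ξ^j) = ξ̄. -/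
open scoped RealInnerProductSpace
open Filter Topology Metric ContinuousLinearMap

theorem aux_mono {E : Type*} [NormedAddCommGroup E] [InnerProductSpace ℝ E]
    (x y a b : E) (h : ‖(x + a) - (y + b)‖ ≤ ‖x - y‖) : ⟪x - y, b⟫ ≥ ⟪x - y, a⟫ := by
  have h2 : ‖(x - y) + (a - b)‖ ^ 2 ≤ ‖x - y‖ ^ 2 := by
    have e : (x - y) + (a - b) = (x + a) - (y + b) := by abel
    rw [e]
    gcongr
  rw [norm_add_sq_real, inner_sub_right] at h2
  nlinarith [sq_nonneg ‖a - b‖]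

theorem aux_freq {E : Type*} [NormedAddCommGroup E] [InnerProductSpace ℝ E]
    (x d : ℕ → E) (hx : ∀ n, x (n + 1) = x n + d n) (r M : ℝ) (hr : 0 ≤ r)
    (hM : ∀ n, ‖d n‖ ≤ M) (hlow : ∀ n : ℕ, n * r ≤ ‖x n‖) (ε : ℝ) (hε : 0 < ε) :
    ∃ᶠ n : ℕ in atTop, (r ^ 2 - ε) * n ≤ ⟪x n, d n⟫ := by
  intro hcon
  obtain ⟨N, hN⟩ := eventually_atTop.1 hcon
  have key : ∀ n : ℕ, N ≤ n → ‖x n‖ ^ 2 ≤ ‖x N‖ ^ 2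
      + (r ^ 2 - ε) * ((n : ℝ) ^ 2 - n - N ^ 2 + N) + M ^ 2 * (n - N) := by
    intro n hn
    induction n, hn using Nat.le_induction with
    | base => nlinarith
    | succ n hn ih =>
      have h1 := not_le.1 (hN n hn)
      have h2 : ‖d n‖ ^ 2 ≤ M ^ 2 := by
        have := hM n
        gcongr
      rw [hx, norm_add_sq_real]
      push_cast
      nlinarith
  set K := ‖x N‖ ^ 2 + (r ^ 2 - ε) * (- (N : ℝ) ^ 2 + N) - M ^ 2 * N with hK
  set L := M ^ 2 - (r ^ 2 - ε) with hL
  obtain ⟨n, hn⟩ := exists_nat_gt ((|K| + |L|) / ε + 1 + N)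
  have hpos : 0 ≤ (|K| + |L|) / ε := by positivity
  have hN0 : (0 : ℝ) ≤ N := Nat.cast_nonneg N
  have hnN : N ≤ n := by
    have : (N : ℝ) ≤ n := by linarith
    exact_mod_cast this
  have h1 := key n hnN
  have h3 : (n * r) ^ 2 ≤ ‖x n‖ ^ 2 := by
    have := hlow n
    gcongr
  have h4 : ε * (n : ℝ) ^ 2 ≤ K + L * n := by
    rw [hK, hL]; nlinarith
  have h5 : |K| + |L| < ε * n := by
    have : (|K| + |L|) / ε < n := by linarith
    rw [div_lt_iff₀ hε] at this
    linarith
  have hn1 : (1 : ℝ) ≤ n := by linarith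
  have h6 : (|K| + |L|) * n < ε * n * n := by
    apply mul_lt_mul_of_pos_right h5; linarith
  have h7 : K ≤ |K| * n := by nlinarith [le_abs_self K, abs_nonneg K]
  have h8 : L * n ≤ |L| * n := by nlinarith [le_abs_self L]
  nlinarith

theorem aux_low {E : Type*} [NormedAddCommGroup E] [InnerProductSpace ℝ E]
    (x d : ℕ → E) (hx : ∀ n, x (n + 1) = x n + d n) (r : ℝ)
    (hr : ∀ n, r ≤ ‖d n‖)
    (hne : ∀ i j, ‖x (i + 1) - x (j + 1)‖ ≤ ‖x i - x j‖)
    (hd : Tendsto (fun n => d (n + 1) - d n) atTop (𝓝 0)) (m : ℕ) :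
    m * r ≤ ‖x m - x 0‖ := by
  have h1 : ∀ m : ℕ, Tendsto (fun j => d (j + m) - d j) atTop (𝓝 0) := by
    intro m
    induction m with
    | zero => simp
    | succ m ih =>
      have := ((hd.comp (tendsto_add_atTop_nat m)).add ih)
      simp only [add_zero] at this
      refine this.congr fun j => ?_
      simp only [Function.comp, add_assoc]
      abel
  have h2 : ∀ m : ℕ, Tendsto (fun j => (x (j + m) - x j) - (m : ℝ) • d j) atTop (𝓝 0) := by
    intro m
    induction m with
    | zero => simp
    | succ m ih =>
      have := ih.add (h1 m)
      simp only [add_zero] at this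
      refine this.congr fun j => ?_
      rw [← add_assoc, hx]
      push_cast
      rw [add_smul, one_smul]
      abel
  have h3 : ∀ j, ‖x (j + m) - x j‖ ≤ ‖x m - x 0‖ := by
    intro j
    induction j with
    | zero => simp
    | succ j ih =>
      have := hne (j + m) j
      rw [show j + 1 + m = j + m + 1 by ring]
      linarith
  have h4 : Tendsto (fun j => ‖x m - x 0‖ + ‖(x (j + m) - x j) - (m : ℝ) • d j‖) atTop
      (𝓝 (‖x m - x 0‖ + 0)) := by
    have := (h2 m).norm
    rw [norm_zero] at this
    exact this.const_add _
  rw [add_zero] at h4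
  refine ge_of_tendsto' h4 fun j => ?_
  have h5 : ‖(m : ℝ) • d j‖ ≤ ‖x (j + m) - x j‖ + ‖(x (j + m) - x j) - (m : ℝ) • d j‖ := by
    have := norm_sub_le (x (j + m) - x j) ((x (j + m) - x j) - (m : ℝ) • d j)
    simpa using this
  rw [norm_smul, Real.norm_natCast] at h5
  have h6 : (m : ℝ) * r ≤ m * ‖d j‖ := by
    have := hr j
    gcongr
  linarith [h3 j]

theorem aux_main {E : Type*} [NormedAddCommGroup E] [InnerProductSpace ℝ E]
    [FiniteDimensional ℝ E]
    (x d : ℕ → E) (hx : ∀ n, x (n + 1) = x n + d n) (r : ℝ) (hr0 : 0 ≤ r)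
    (hr : ∀ n, r ≤ ‖d n‖) (hrt : Tendsto (fun n => ‖d n‖) atTop (𝓝 r))
    (hM : ∀ n, ‖d n‖ ≤ ‖d 0‖) (h0 : x 0 = 0)
    (hne : ∀ i j, ‖x (i + 1) - x (j + 1)‖ ≤ ‖x i - x j‖)
    (hd : Tendsto (fun n => d (n + 1) - d n) atTop (𝓝 0)) :
    ∃ v, Tendsto d atTop (𝓝 v) := by
  have hlow : ∀ n : ℕ, n * r ≤ ‖x n‖ := by
    intro n
    have := aux_low x d hx r hr hne hd n
    simpa [h0] using this
  have hsum : ∀ n, ‖x n‖ ≤ ∑ i ∈ Finset.range n, ‖d i‖ := by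
    intro n
    induction n with
    | zero => simp [h0]
    | succ n ih =>
      rw [hx, Finset.sum_range_succ]
      linarith [norm_add_le (x n) (d n)]
  have hces := hrt.cesaro
  have hy : ∀ n : ℕ, ‖(n : ℝ)⁻¹ • x n‖ ≤ (n : ℝ)⁻¹ * ∑ i ∈ Finset.range n, ‖d i‖ := by
    intro n
    rw [norm_smul, norm_inv, Real.norm_natCast]
    have := hsum n
    gcongr
  have hfr : ∀ k : ℕ, ∃ᶠ n : ℕ in atTop,
      (r ^ 2 - 1 / ((k : ℝ) + 1)) * n ≤ ⟪x n, d n⟫ ∧ 0 < n := fun k =>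
    (aux_freq x d hx r _ hr0 hM hlow _ (by positivity)).and_eventually (eventually_gt_atTop 0)
  obtain ⟨φ, hφ, hφ2⟩ := extraction_forall_of_frequently hfr
  obtain ⟨C, hC⟩ := hces.bddAbove_range
  obtain ⟨v, -, ψ, hψ, hv⟩ := tendsto_subseq_of_bounded (x := fun k => (φ k : ℝ)⁻¹ • x (φ k))
    (Metric.isBounded_closedBall (x := (0 : E)) (r := C)) (by
      intro k
      rw [mem_closedBall_zero_iff]
      exact (hy _).trans (hC ⟨_, rfl⟩))
  have hφψ : Tendsto (fun k => φ (ψ k)) atTop atTop :=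
    hφ.tendsto_atTop.comp hψ.tendsto_atTop
  have hvr : ‖v‖ ≤ r :=
    le_of_tendsto_of_tendsto' hv.norm (hces.comp hφψ) fun k => hy _
  have hinner : ∀ j, r ^ 2 ≤ ⟪v, d j⟫ := by
    intro j
    have t1 : Tendsto (fun k => ⟪(φ (ψ k) : ℝ)⁻¹ • x (φ (ψ k)), d j⟫) atTop (𝓝 ⟪v, d j⟫) :=
      hv.inner tendsto_const_nhds
    have t2 : Tendsto (fun k => r ^ 2 - 1 / ((ψ k : ℝ) + 1)
        - (φ (ψ k) : ℝ)⁻¹ * (‖x j‖ * (‖d 0‖ + ‖d 0‖))) atTop (𝓝 (r ^ 2 - 0 - 0 * (‖x j‖ * (‖d 0‖ + ‖d 0‖)))) := by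
      refine (Tendsto.sub tendsto_const_nhds ?_).sub (Tendsto.mul_const _ ?_)
      · exact (tendsto_one_div_add_atTop_nhds_zero_nat (𝕜 := ℝ)).comp hψ.tendsto_atTop
      · exact (tendsto_inv_atTop_nhds_zero_nat (𝕜 := ℝ)).comp hφψ
    have := le_of_tendsto_of_tendsto' t2 t1 fun k => ?_
    · simpa using this
    obtain ⟨g1, g2⟩ := hφ2 (ψ k)
    set n := φ (ψ k)
    have hn : (0 : ℝ) < n := by exact_mod_cast g2
    have m1 := aux_mono (x n) (x j) (d n) (d j) (by rw [← hx, ← hx]; exact hne n j)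
    have m2 : -(‖x j‖ * (‖d 0‖ + ‖d 0‖)) ≤ ⟪x j, d j - d n⟫ := by
      have a1 := abs_real_inner_le_norm (x j) (d j - d n)
      have a2 : ‖d j - d n‖ ≤ ‖d 0‖ + ‖d 0‖ := by
        linarith [norm_sub_le (d j) (d n), hM j, hM n]
      have a3 : ‖x j‖ * ‖d j - d n‖ ≤ ‖x j‖ * (‖d 0‖ + ‖d 0‖) := by gcongr
      linarith [neg_abs_le ⟪x j, d j - d n⟫]
    rw [inner_sub_left, inner_sub_left] at m1
    rw [inner_sub_right] at m2
    rw [real_inner_smul_left]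
    have m3 : (r ^ 2 - 1 / ((ψ k : ℝ) + 1)) * n - (‖x j‖ * (‖d 0‖ + ‖d 0‖)) ≤ ⟪x n, d j⟫ := by
      linarith
    have m4 := mul_le_mul_of_nonneg_left m3 (inv_nonneg.2 hn.le)
    refine le_trans (le_of_eq ?_) m4
    field_simp
  refine ⟨v, ?_⟩
  rw [tendsto_iff_norm_sub_tendsto_zero]
  have t : Tendsto (fun j => √(‖d j‖ ^ 2 - r ^ 2)) atTop (𝓝 0) := by
    have := ((hrt.pow 2).sub_const (r ^ 2)).sqrt
    simpa using this
  refine squeeze_zero (fun _ => norm_nonneg _) (fun j => ?_) t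
  apply Real.le_sqrt_of_sq_le
  rw [norm_sub_sq_real, real_inner_comm]
  have : ‖v‖ ^ 2 ≤ r ^ 2 := by gcongr
  linarith [hinner j]

/-- fixed-point iterations of a `γ`-averaged operator have a
minimal-displacement vector `ξ̄` with `ξ^j/j → ξ̄` and `ξ^{j+1} - ξ^j → ξ̄`. -/
theorem stmt1 {p : ℕ} (γ : ℝ) (hγ0 : 0 < γ) (hγ1 : γ < 1)
    (T : EuclideanSpace ℝ (Fin p) → EuclideanSpace ℝ (Fin p))
    (hT : ∀ ξ₁ ξ₂, ‖T ξ₁ - T ξ₂‖^2 - ‖ξ₁ - ξ₂‖^2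
      ≤ ((γ - 1)/γ) * ‖ξ₁ - T ξ₁ - ξ₂ + T ξ₂‖^2)
    (ξ : ℕ → EuclideanSpace ℝ (Fin p))
    (hξ : ∀ j : ℕ, ξ (j + 1) = T (ξ j)) :
    ∃ ξbar : EuclideanSpace ℝ (Fin p),
      Tendsto (fun j : ℕ => (j : ℝ)⁻¹ • ξ j) atTop (𝓝 ξbar) ∧
      Tendsto (fun j : ℕ => ξ (j + 1) - ξ j) atTop (𝓝 ξbar) := by
  set c := (1 - γ) / γ with hc
  have hc0 : 0 < c := div_pos (by linarith) hγ0
  have hcc : (γ - 1) / γ = - c := by rw [hc]; ring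
  rw [hcc] at hT
  have hne : ∀ i j, ‖ξ (i + 1) - ξ (j + 1)‖ ≤ ‖ξ i - ξ j‖ := by
    intro i j
    rw [hξ, hξ]
    apply le_of_sq_le_sq _ (norm_nonneg _)
    nlinarith [hT (ξ i) (ξ j), sq_nonneg ‖ξ i - T (ξ i) - ξ j + T (ξ j)‖]
  set d : ℕ → EuclideanSpace ℝ (Fin p) := fun j => ξ (j + 1) - ξ j with hd
  have hdec : ∀ j, c * ‖d (j + 1) - d j‖ ^ 2 ≤ ‖d j‖ ^ 2 - ‖d (j + 1)‖ ^ 2 := by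
    intro j
    have := hT (ξ (j + 1)) (ξ j)
    rw [← hξ, ← hξ] at this
    have e : ξ (j + 1) - ξ (j + 1 + 1) - ξ j + ξ (j + 1) = -(d (j + 1) - d j) := by
      simp only [hd]; abel
    rw [e, norm_neg] at this
    simp only [hd] at this ⊢
    linarith
  have hanti : Antitone fun j => ‖d j‖ := antitone_nat_of_succ_le fun j => hne (j + 1) j
  have hbdd : BddBelow (Set.range fun j => ‖d j‖) :=
    ⟨0, by rintro _ ⟨j, rfl⟩; exact norm_nonneg _⟩
  have hrt := tendsto_atTop_ciInf hanti hbdd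
  set r := ⨅ j, ‖d j‖ with hr
  have hr0 : 0 ≤ r := le_ciInf fun j => norm_nonneg _
  have hdd : Tendsto (fun n => d (n + 1) - d n) atTop (𝓝 0) := by
    rw [tendsto_zero_iff_norm_tendsto_zero]
    have t : Tendsto (fun j => √((‖d j‖ ^ 2 - ‖d (j + 1)‖ ^ 2) / c)) atTop (𝓝 0) := by
      have := (((hrt.pow 2).sub ((hrt.comp (tendsto_add_atTop_nat 1)).pow 2)).div_const c).sqrt
      simpa using this
    refine squeeze_zero (fun _ => norm_nonneg _) (fun j => ?_) t
    apply Real.le_sqrt_of_sq_le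
    rw [le_div_iff₀ hc0]
    linarith [hdec j]
  obtain ⟨v, hv⟩ := aux_main (fun n => ξ n - ξ 0) d (fun n => by simp only [hd]; abel) r hr0
    (fun n => ciInf_le hbdd n) hrt (fun n => hanti (Nat.zero_le n)) (by simp)
    (fun i j => by simpa using hne i j) hdd
  refine ⟨v, ?_, hv⟩
  have h1 := hv.cesaro_smul
  have h2 : Tendsto (fun j : ℕ => (j : ℝ)⁻¹ • ξ 0) atTop (𝓝 ((0 : ℝ) • ξ 0)) :=
    (tendsto_inv_atTop_nhds_zero_nat (𝕜 := ℝ)).smul_const _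
  have h3 := h1.add h2
  rw [zero_smul, add_zero] at h3
  refine h3.congr fun n => ?_
  rw [← smul_add, Finset.sum_range_sub]
  simp
end

section
/- Let P ∈ ℝ^{n×n} be symmetric positive semidefinite, q ∈ ℝⁿ, H ∈ ℝ^{m×n}, g ∈ ℝᵐ, D ⊆ ℝⁿ nonempty closed convex, K ⊆ ℝᵐ a nonempty closed convex cone with polar cone K°, and α > 0. Let the sequence {w^j, z^j, v^j} be generated by the PIPG iteration: w^{j+1} = π_{K°}[v^j + α(H z^j − g)], z^{j+1} = π_D[z^j − α(P z^j + q + Hᵀ w^{j+1})], v^{j+1} = w^{j+1} + α H(z^{j+1} − z^j). Let λ ≥ ‖P‖. Then for all j ≥ 3, d(−P z^j − q − Hᵀ w^j | N_D(z^j)) ≤ (1/α + λ)‖z^j − z^{j−1}‖. -/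
open scoped RealInnerProductSpace
open Filter Topology Metric ContinuousLinearMap

/-- The projection residual onto a nonempty closed convex set is a normal vector. -/
theorem proj_inner_le {E : Type*} [NormedAddCommGroup E] [InnerProductSpace ℝ E]
    [CompleteSpace E] (S : Set E) (hne : S.Nonempty) (hcl : IsClosed S) (hc : Convex ℝ S)
    (x : E) : ∀ y ∈ S, ⟪x - proj S x, y - proj S x⟫ ≤ 0 := by
  have hbdd : BddBelow (Set.range fun w : S => ‖x - w‖) :=
    ⟨0, by rintro _ ⟨w, rfl⟩; exact norm_nonneg _⟩
  have hex : ∃ y, y ∈ S ∧ ∀ z ∈ S, ‖x - y‖ ≤ ‖x - z‖ := by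
    obtain ⟨y, hy, h⟩ := exists_norm_eq_iInf_of_complete_convex hne hcl.isComplete hc x
    exact ⟨y, hy, fun z hz => h ▸ ciInf_le hbdd (⟨z, hz⟩ : S)⟩
  have hp : proj S x ∈ S ∧ ∀ z ∈ S, ‖x - proj S x‖ ≤ ‖x - z‖ := by
    unfold _root_.proj
    rw [dif_pos hex]
    exact hex.choose_spec
  haveI : Nonempty S := hne.to_subtype
  exact (norm_eq_iInf_iff_real_inner_le_zero hc hp.1).1
    (le_antisymm (le_ciInf fun w => hp.2 w w.2) (ciInf_le hbdd (⟨_, hp.1⟩ : S)))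

/-- distance bound for the primal optimality residual of PIPG. -/
theorem stmt2 {n m : ℕ} (α : ℝ) (hα0 : 0 < α)
    (P : EuclideanSpace ℝ (Fin n) →L[ℝ] EuclideanSpace ℝ (Fin n))
    (hPsa : IsSelfAdjoint P) (hPpsd : ∀ x, 0 ≤ ⟪P x, x⟫)
    (q : EuclideanSpace ℝ (Fin n))
    (H : EuclideanSpace ℝ (Fin n) →L[ℝ] EuclideanSpace ℝ (Fin m))
    (g : EuclideanSpace ℝ (Fin m))
    (D : Set (EuclideanSpace ℝ (Fin n)))
    (hDne : D.Nonempty) (hDcl : IsClosed D) (hDconv : Convex ℝ D)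
    (K : Set (EuclideanSpace ℝ (Fin m)))
    (hKne : K.Nonempty) (hKcl : IsClosed K) (hKconv : Convex ℝ K)
    (hKcone : ∀ w ∈ K, ∀ a : ℝ, 0 ≤ a → a • w ∈ K)
    (w v : ℕ → EuclideanSpace ℝ (Fin m))
    (z : ℕ → EuclideanSpace ℝ (Fin n))
    (hw : ∀ j : ℕ, w (j + 1) = proj (polarCone K) (v j + α • (H (z j) - g)))
    (hz : ∀ j : ℕ, z (j + 1) =
      proj D (z j - α • (P (z j) + q + (ContinuousLinearMap.adjoint H) (w (j + 1)))))
    (hv : ∀ j : ℕ, v (j + 1) = w (j + 1) + α • H (z (j + 1) - z j))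
    (lam : ℝ) (hlam : ‖P‖ ≤ lam) :
    ∀ j : ℕ, 3 ≤ j →
      Metric.infDist (-(P (z j)) - q - (ContinuousLinearMap.adjoint H) (w j))
          (normalCone D (z j))
        ≤ (1/α + lam) * ‖z j - z (j - 1)‖ := by
  intro j hj
  obtain ⟨k, rfl⟩ : ∃ k, j = k + 1 := ⟨j - 1, by omega⟩
  rw [Nat.add_sub_cancel]
  set x := z k - α • (P (z k) + q + (ContinuousLinearMap.adjoint H) (w (k + 1))) with hx
  have hin := proj_inner_le D hDne hDcl hDconv x
  rw [← hz k] at hin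
  have hmem : α⁻¹ • (x - z (k + 1)) ∈ normalCone D (z (k + 1)) := by
    intro y hy
    rw [real_inner_smul_left]
    exact mul_nonpos_of_nonneg_of_nonpos (inv_nonneg.2 hα0.le) (hin y hy)
  refine (Metric.infDist_le_dist_of_mem hmem).trans ?_
  have heq : -(P (z (k + 1))) - q - (ContinuousLinearMap.adjoint H) (w (k + 1))
      - α⁻¹ • (x - z (k + 1))
      = α⁻¹ • (z (k + 1) - z k) - P (z (k + 1) - z k) := by
    rw [hx, map_sub, smul_sub, smul_sub, smul_smul, inv_mul_cancel₀ hα0.ne', one_smul,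
      smul_sub]
    abel
  rw [dist_eq_norm, heq]
  refine (norm_sub_le _ _).trans ?_
  rw [norm_smul, Real.norm_of_nonneg (inv_nonneg.2 hα0.le), add_mul, one_div]
  have := P.le_of_opNorm_le hlam (z (k + 1) - z k)
  linarith
end

section
/- Under the setting of the PIPG iteration (P symmetric positive semidefinite, D nonempty closed convex, K nonempty closed convex cone, step size α satisfying 0 < α ≤ (8 − 4/γ)/(√(λ² + 16ν²) + λ) for some γ ∈ (1/2, 1), λ ≥ ‖P‖, ν ≥ ‖H‖), let z̄ = lim_{j→∞}(z^j − z^{j−1}) and w̄ = lim_{j→∞}(w^j − w^{j−1}) be the limits of consecutive differences of the PIPG iterates. If ‖z̄‖ = ‖w̄‖ = 0, then lim_{j→∞} d(−P z^j − q − Hᵀ w^j | N_D(z^j)) = 0 and lim_{j→∞} d(H z^j − g | N_{K°}(w^j)) = 0. -/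
open scoped RealInnerProductSpace
open Filter Topology Metric ContinuousLinearMap

theorem proj_normal {E : Type*} [NormedAddCommGroup E] [InnerProductSpace ℝ E] [CompleteSpace E]
    {S : Set E} (hne : S.Nonempty) (hcl : IsClosed S) (hconv : Convex ℝ S) (x : E) :
    x - proj S x ∈ normalCone S (proj S x) := by
  have hex : ∃ y, y ∈ S ∧ ∀ z ∈ S, ‖x - y‖ ≤ ‖x - z‖ := by
    obtain ⟨y, hy, h⟩ := exists_norm_eq_iInf_of_complete_convex hne hcl.isComplete hconv x
    refine ⟨y, hy, fun z hz => ?_⟩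
    rw [h]
    exact ciInf_le (f := fun w : S => ‖x - w‖)
      ⟨0, by rintro _ ⟨a, rfl⟩; exact norm_nonneg _⟩ ⟨z, hz⟩
  have hp : proj S x ∈ S ∧ ∀ z ∈ S, ‖x - proj S x‖ ≤ ‖x - z‖ := by
    unfold _root_.proj
    rw [dif_pos hex]
    exact hex.choose_spec
  obtain ⟨h1, h2⟩ := hp
  have : Nonempty S := hne.to_subtype
  refine (norm_eq_iInf_iff_real_inner_le_zero hconv h1).1 (le_antisymm ?_ ?_)
  · exact le_ciInf fun z => h2 z z.2
  · exact ciInf_le (f := fun w : S => ‖x - w‖)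
      ⟨0, by rintro _ ⟨a, rfl⟩; exact norm_nonneg _⟩ ⟨_, h1⟩

theorem normalCone_smul {E : Type*} [NormedAddCommGroup E] [InnerProductSpace ℝ E]
    {S : Set E} {x y : E} (h : y ∈ normalCone S x) {a : ℝ} (ha : 0 ≤ a) :
    a • y ∈ normalCone S x := by
  intro z hz
  rw [real_inner_smul_left]
  exact mul_nonpos_of_nonneg_of_nonpos ha (h z hz)

theorem polarCone_closed {E : Type*} [NormedAddCommGroup E] [InnerProductSpace ℝ E]
    (K : Set E) : IsClosed (polarCone K) := by
  have : polarCone K = ⋂ y ∈ K, {w : E | ⟪w, y⟫ ≤ 0} := by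
    ext w; simp [polarCone]
  rw [this]
  exact isClosed_biInter fun y _ => isClosed_le (by fun_prop) continuous_const

theorem polarCone_convex {E : Type*} [NormedAddCommGroup E] [InnerProductSpace ℝ E]
    (K : Set E) : Convex ℝ (polarCone K) := by
  intro a ha b hb s t hs ht _ y hy
  rw [inner_add_left, real_inner_smul_left, real_inner_smul_left]
  have := mul_nonpos_of_nonneg_of_nonpos hs (ha y hy)
  have := mul_nonpos_of_nonneg_of_nonpos ht (hb y hy)
  linarith

/-- if the limits of consecutive differences of the PIPG iterates vanish,
then the primal-dual optimality residuals converge to zero. -/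
theorem stmt5 {n m : ℕ} (α : ℝ)
    (P : EuclideanSpace ℝ (Fin n) →L[ℝ] EuclideanSpace ℝ (Fin n))
    (hPsa : IsSelfAdjoint P) (hPpsd : ∀ x, 0 ≤ ⟪P x, x⟫)
    (q : EuclideanSpace ℝ (Fin n))
    (H : EuclideanSpace ℝ (Fin n) →L[ℝ] EuclideanSpace ℝ (Fin m))
    (g : EuclideanSpace ℝ (Fin m))
    (D : Set (EuclideanSpace ℝ (Fin n)))
    (hDne : D.Nonempty) (hDcl : IsClosed D) (hDconv : Convex ℝ D)
    (K : Set (EuclideanSpace ℝ (Fin m)))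
    (hKne : K.Nonempty) (hKcl : IsClosed K) (hKconv : Convex ℝ K)
    (hKcone : ∀ w ∈ K, ∀ a : ℝ, 0 ≤ a → a • w ∈ K)
    (w v : ℕ → EuclideanSpace ℝ (Fin m))
    (z : ℕ → EuclideanSpace ℝ (Fin n))
    (hw : ∀ j : ℕ, w (j + 1) = proj (polarCone K) (v j + α • (H (z j) - g)))
    (hz : ∀ j : ℕ, z (j + 1) =
      proj D (z j - α • (P (z j) + q + (ContinuousLinearMap.adjoint H) (w (j + 1)))))
    (hv : ∀ j : ℕ, v (j + 1) = w (j + 1) + α • H (z (j + 1) - z j))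
    (γ lam ν : ℝ) (hγ : 1/2 < γ) (hγ1 : γ < 1)
    (hlam : ‖P‖ ≤ lam) (hν : ‖H‖ ≤ ν) (hα0 : 0 < α)
    (hα : α ≤ (8 - 4/γ) / (Real.sqrt (lam^2 + 16*ν^2) + lam))
    (zbar : EuclideanSpace ℝ (Fin n)) (wbar : EuclideanSpace ℝ (Fin m))
    (hzlim : Tendsto (fun j : ℕ => z (j + 1) - z j) atTop (𝓝 zbar))
    (hwlim : Tendsto (fun j : ℕ => w (j + 1) - w j) atTop (𝓝 wbar))
    (hz0 : ‖zbar‖ = 0) (hw0 : ‖wbar‖ = 0) :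
    Tendsto (fun j : ℕ =>
        Metric.infDist (-(P (z j)) - q - (ContinuousLinearMap.adjoint H) (w j))
          (normalCone D (z j))) atTop (𝓝 0) ∧
    Tendsto (fun j : ℕ =>
        Metric.infDist (H (z j) - g) (normalCone (polarCone K) (w j))) atTop (𝓝 0) := by
  have hzb : zbar = 0 := norm_eq_zero.1 hz0
  have hwb : wbar = 0 := norm_eq_zero.1 hw0
  subst hzb hwb
  have hai : 0 ≤ α⁻¹ := inv_nonneg.2 hα0.le
  have hane : α ≠ 0 := hα0.ne'
  constructor
  · rw [← tendsto_add_atTop_iff_nat 1]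
    have hlim : Tendsto (fun j : ℕ => ‖α⁻¹ • (z (j + 1) - z j) - P (z (j + 1) - z j)‖)
        atTop (𝓝 0) := by
      have := ((hzlim.const_smul α⁻¹).sub ((P.continuous.tendsto _).comp hzlim)).norm
      simpa using this
    refine squeeze_zero (fun _ => infDist_nonneg) (fun j => ?_) hlim
    have hmem := normalCone_smul (proj_normal hDne hDcl hDconv
      (z j - α • (P (z j) + q + (ContinuousLinearMap.adjoint H) (w (j + 1))))) hai
    rw [← hz j] at hmem
    refine (infDist_le_dist_of_mem hmem).trans (le_of_eq ?_)
    rw [dist_eq_norm]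
    congr 1
    simp only [smul_sub, inv_smul_smul₀ hane, map_sub]
    abel
  · rw [← tendsto_add_atTop_iff_nat 2]
    have hz1 := (tendsto_add_atTop_iff_nat 1).2 hzlim
    have hw1 := (tendsto_add_atTop_iff_nat 1).2 hwlim
    have hlim : Tendsto (fun j : ℕ => ‖H (z (j + 1 + 1) - z (j + 1)) - H (z (j + 1) - z j)
        + α⁻¹ • (w (j + 1 + 1) - w (j + 1))‖) atTop (𝓝 0) := by
      have := ((((H.continuous.tendsto _).comp hz1).sub
        ((H.continuous.tendsto _).comp hzlim)).add (hw1.const_smul α⁻¹)).norm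
      simpa using this
    refine squeeze_zero (fun _ => infDist_nonneg) (fun j => ?_) hlim
    have hmem := normalCone_smul (proj_normal (S := polarCone K) ⟨0, by intro y _; simp⟩
      (polarCone_closed K) (polarCone_convex K) (v (j + 1) + α • (H (z (j + 1)) - g))) hai
    rw [← hw (j + 1), hv j] at hmem
    refine (infDist_le_dist_of_mem hmem).trans (le_of_eq ?_)
    rw [dist_eq_norm]
    congr 1
    simp only [smul_sub, smul_add, inv_smul_smul₀ hane, map_sub]
    abel
end

section
/- Let D ⊆ ℝⁿ be a nonempty closed convex set and let {y^j} be a sequence in ℝⁿ such that lim_{j→∞} y^j / j = ȳ for some ȳ ∈ ℝⁿ. Then lim_{j→∞} π_D[y^j] / j = π_{rec D}[ȳ], the projection of ȳ onto the recession cone of D. -/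
open scoped RealInnerProductSpace
open Filter Topology Metric ContinuousLinearMap

lemma proj_spec_aux {E : Type*} [NormedAddCommGroup E] [InnerProductSpace ℝ E]
    (S : Set E) (x : E) (h : ∃ y, y ∈ S ∧ ∀ z ∈ S, ‖x - y‖ ≤ ‖x - z‖) :
    proj S x ∈ S ∧ ∀ z ∈ S, ‖x - proj S x‖ ≤ ‖x - z‖ := by
  unfold _root_.proj
  rw [dif_pos h]
  exact h.choose_spec

lemma proj_unique_aux {E : Type*} [NormedAddCommGroup E] [InnerProductSpace ℝ E]
    (S : Set E) (hS : Convex ℝ S) (x v : E) (hv : v ∈ S) (hm : ∀ z ∈ S, ‖x - v‖ ≤ ‖x - z‖) :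
    v = proj S x := by
  obtain ⟨hu, hum⟩ := proj_spec_aux S x ⟨v, hv, hm⟩
  set u := proj S x
  have hmid : (1/2 : ℝ) • u + (1/2 : ℝ) • v ∈ S :=
    hS hu hv (by norm_num) (by norm_num) (by norm_num)
  have h1 := hm _ hmid
  have h2 : ‖x - u‖ = ‖x - v‖ := le_antisymm (hum v hv) (hm u hu)
  have h3 := parallelogram_law_with_norm ℝ (x - u) (x - v)
  have h4 : (x - u) + (x - v) = (2 : ℝ) • (x - ((1/2 : ℝ) • u + (1/2 : ℝ) • v)) := by
    module
  have h5 : (x - u) - (x - v) = v - u := by abel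
  rw [h4, h5, norm_smul, h2] at h3
  norm_num at h3
  have h6 : ‖v - u‖ = 0 := by
    norm_num at h1
    have := norm_nonneg (x - v)
    have := norm_nonneg (v - u)
    nlinarith
  exact sub_eq_zero.mp (norm_eq_zero.mp h6)

lemma recCone_convex_aux {E : Type*} [NormedAddCommGroup E] [InnerProductSpace ℝ E]
    (D : Set E) (hD : Convex ℝ D) : Convex ℝ (recCone D) := by
  intro a ha b hb s t hs ht hst z hz
  have h := hD (ha z hz) (hb z hz) hs ht hst
  have e : s • (a + z) + t • (b + z) = s • a + t • b + z := by
    have : z = (s + t) • z := by rw [hst, one_smul]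
    conv_rhs => rw [this]
    module
  rwa [e] at h

lemma recCone_nsmul_aux {E : Type*} [NormedAddCommGroup E] [InnerProductSpace ℝ E]
    (D : Set E) (w z : E) (hw : w ∈ recCone D) (hz : z ∈ D) (j : ℕ) :
    (j : ℝ) • w + z ∈ D := by
  induction j with
  | zero => simpa using hz
  | succ k ih =>
    have := hw _ ih
    have e : w + ((k : ℝ) • w + z) = ((k + 1 : ℕ) : ℝ) • w + z := by
      push_cast
      module
    rwa [e] at this

/-- if `y^j / j → ȳ`, then `π_D[y^j]/j → π_{rec D}[ȳ]`. -/
theorem stmt9 {n : ℕ} (D : Set (EuclideanSpace ℝ (Fin n)))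
    (hDne : D.Nonempty) (hDcl : IsClosed D) (hDconv : Convex ℝ D)
    (y : ℕ → EuclideanSpace ℝ (Fin n)) (ybar : EuclideanSpace ℝ (Fin n))
    (hy : Tendsto (fun j : ℕ => (j : ℝ)⁻¹ • y j) atTop (𝓝 ybar)) :
    Tendsto (fun j : ℕ => (j : ℝ)⁻¹ • proj D (y j)) atTop
      (𝓝 (proj (recCone D) ybar)) := by
  have hp : ∀ j, proj D (y j) ∈ D ∧ ∀ z ∈ D, ‖y j - proj D (y j)‖ ≤ ‖y j - z‖ := by
    intro j
    apply proj_spec_aux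
    obtain ⟨p, hpD, hpe⟩ := hDcl.exists_infDist_eq_dist hDne (y j)
    refine ⟨p, hpD, fun z hz => ?_⟩
    rw [← dist_eq_norm, ← dist_eq_norm, ← hpe]
    exact infDist_le_dist_of_mem hz
  obtain ⟨d, hd⟩ := hDne
  have hinv : Tendsto (fun j : ℕ => (j : ℝ)⁻¹) atTop (𝓝 0) := tendsto_inv_atTop_nhds_zero_nat
  -- key inequality
  have key : ∀ w ∈ recCone D, ∀ j : ℕ, 1 ≤ j →
      ‖(j : ℝ)⁻¹ • y j - (j : ℝ)⁻¹ • proj D (y j)‖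
        ≤ ‖(j : ℝ)⁻¹ • y j - (w + (j : ℝ)⁻¹ • d)‖ := by
    intro w hw j hj
    have hj0 : (j : ℝ) ≠ 0 := by positivity
    have h := (hp j).2 _ (recCone_nsmul_aux D w d hw hd j)
    have e : (j : ℝ)⁻¹ • y j - (w + (j : ℝ)⁻¹ • d)
        = (j : ℝ)⁻¹ • (y j - ((j : ℝ) • w + d)) := by
      rw [smul_sub, smul_add, smul_smul, inv_mul_cancel₀ hj0, one_smul]
    rw [e, ← smul_sub, norm_smul, norm_smul]
    gcongr
  have hlim : ∀ w, Tendsto (fun j : ℕ => ‖(j : ℝ)⁻¹ • y j - (w + (j : ℝ)⁻¹ • d)‖) atTop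
      (𝓝 ‖ybar - w‖) := by
    intro w
    have := (hy.sub ((hinv.smul_const d).const_add w)).norm
    simpa using this
  have h0 : (0 : EuclideanSpace ℝ (Fin n)) ∈ recCone D := fun z hz => by simpa using hz
  have hbd : ∀ᶠ j : ℕ in atTop, (j : ℝ)⁻¹ • proj D (y j) ∈
      closedBall (0 : EuclideanSpace ℝ (Fin n)) ((‖ybar‖ + 1) + (‖ybar‖ + 1)) := by
    have e1 := (hlim 0).eventually_lt_const (u := ‖ybar‖ + 1) (by simp)
    have e2 := hy.norm.eventually_lt_const (u := ‖ybar‖ + 1) (by simp)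
    filter_upwards [e1, e2, eventually_ge_atTop 1] with j h1 h2 hj
    have h3 := key 0 h0 j hj
    have h4 := norm_sub_norm_le ((j : ℝ)⁻¹ • proj D (y j)) ((j : ℝ)⁻¹ • y j)
    rw [norm_sub_rev] at h4
    rw [mem_closedBall_zero_iff]
    linarith
  apply tendsto_of_subseq_tendsto
  intro ns hns
  obtain ⟨v, -, φ, hφ, hv⟩ := (isCompact_closedBall (0 : EuclideanSpace ℝ (Fin n))
    ((‖ybar‖ + 1) + (‖ybar‖ + 1))).tendsto_subseq' (hns.eventually hbd).frequently
  refine ⟨φ, ?_⟩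
  have hm : Tendsto (fun k => ns (φ k)) atTop atTop := hns.comp hφ.tendsto_atTop
  have hge : ∀ᶠ k in atTop, 1 ≤ ns (φ k) := hm.eventually (eventually_ge_atTop 1)
  have hvr : v ∈ recCone D := by
    intro z hz
    have hl : Tendsto (fun k => ((ns (φ k) : ℕ) : ℝ)⁻¹ • proj D (y (ns (φ k)))
        + (1 - ((ns (φ k) : ℕ) : ℝ)⁻¹) • z) atTop (𝓝 (v + (1 - (0:ℝ)) • z)) :=
      Tendsto.add hv (((hinv.comp hm).const_sub 1).smul_const z)
    rw [sub_zero, one_smul] at hl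
    refine hDcl.mem_of_tendsto hl ?_
    filter_upwards [hge] with k hk
    refine hDconv (hp _).1 hz (by positivity) ?_ (by ring)
    rw [sub_nonneg]
    exact inv_le_one_of_one_le₀ (by exact_mod_cast hk)
  have hvm : v = proj (recCone D) ybar := by
    refine proj_unique_aux _ (recCone_convex_aux D hDconv) _ _ hvr fun w hw => ?_
    refine le_of_tendsto_of_tendsto ((hy.comp hm).sub hv).norm ((hlim w).comp hm) ?_
    filter_upwards [hge] with k hk
    exact key w hw _ hk
  rw [← hvm]
  exact hv
end
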